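/- Let M = N ≥ 2 and let U₁,…,U_N and Ψ be as in the context (all U_k of block-diagonal form diag(Ũ_k, I_{n−m})), with det W(U₁,…,U_{N−1}) ≠ 0 on an open interval. Let Y_N be the n×n matrix with entries y_{ji} = det W_j(U₁,…,U_{N−1}, U_{i;N}) / det W(U₁,…,U_{N−1}), where U_{i;N} is the i-th column of U_N, and let θ_j = det W_j(U₁,…,U_{N−1}, Ψ) / det W(U₁,…,U_{N−1}). For j ∈ {1,…,n}, let Y_N^j be the (n+1)×(n+1) matrix obtained from Y_N by appending the column (θ₁,…,θₙ)ᵗ on the right and the row (∂y_{j1},…,∂y_{jn}) at the bottom, with corner entry ∂^{(m)}θ_j. Then det Y_N^j = det W_j(U₁,…,U_N, Ψ) / det W(U₁,…,U_{N−1}). -/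

import Mathlib

open Matrix

noncomputable section

namespace SingularDarboux

variable {n : ℕ}

/-- Entrywise derivative `∂` of a matrix-valued function. -/
def matD (U : ℝ → Matrix (Fin n) (Fin n) ℝ) : ℝ → Matrix (Fin n) (Fin n) ℝ :=
  fun x => Matrix.of fun i j => deriv (fun t => U t i j) x

/-- The operator `D_m` acting on matrix-valued functions: it differentiates the
first `m` rows and keeps the remaining rows unchanged. -/
def matDm (m : ℕ) (U : ℝ → Matrix (Fin n) (Fin n) ℝ) : ℝ → Matrix (Fin n) (Fin n) ℝ :=
  fun x => Matrix.of fun i j => if (i : ℕ) < m then deriv (fun t => U t i j) x else U x i j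

/-- Entrywise derivative `∂` of a vector-valued function. -/
def vecD (Ψ : ℝ → Fin n → ℝ) : ℝ → Fin n → ℝ := fun x i => deriv (fun t => Ψ t i) x

/-- The operator `D_m` (equivalently `∂^{(m)}`) acting on vector-valued functions:
it differentiates the first `m` components and keeps the remaining ones unchanged. -/
def vecDm (m : ℕ) (Ψ : ℝ → Fin n → ℝ) : ℝ → Fin n → ℝ :=
  fun x i => if (i : ℕ) < m then deriv (fun t => Ψ t i) x else Ψ x i

/-- All entries of the matrix-valued function are smooth. -/
def SmoothMat (U : ℝ → Matrix (Fin n) (Fin n) ℝ) : Prop :=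
  ∀ i j, ContDiff ℝ (⊤ : ℕ∞) fun x => U x i j

/-- All components of the vector-valued function are smooth. -/
def SmoothVec (Ψ : ℝ → Fin n → ℝ) : Prop := ∀ i, ContDiff ℝ (⊤ : ℕ∞) fun x => Ψ x i

/-- `U = diag(Ũ, I_{n-m})`: outside of the top-left `m × m` block, `U` coincides with
the identity matrix. -/
def BlockDiag (m : ℕ) (U : ℝ → Matrix (Fin n) (Fin n) ℝ) : Prop :=
  ∀ (x : ℝ) (i j : Fin n), (m ≤ (i : ℕ) ∨ m ≤ (j : ℕ)) → U x i j = if i = j then 1 else 0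

/-- The `(r,k)` block (`r,k` $0$-indexed) of the matrix `W(U₁,…,U_M;U_{M+1},…,U_N)`. -/
def Wblock (m M r k : ℕ) (U : ℝ → Matrix (Fin n) (Fin n) ℝ) : ℝ → Matrix (Fin n) (Fin n) ℝ :=
  if k < M then (if r ≤ k then (matDm m)^[r] U else matD^[r] U)
  else (if r < M then (matDm m)^[r] U else matD^[r - M] ((matDm m)^[M] U))

/-- The `r`-th block of the column appended on the right in `W_j`. -/
def Wcol (m M r : ℕ) (Ψ : ℝ → Fin n → ℝ) : ℝ → Fin n → ℝ :=
  if r < M then (vecDm m)^[r] Ψ else vecD^[r - M] ((vecDm m)^[M] Ψ)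

/-- The `i`-th row of the `k`-th block of the row appended at the bottom in `W_j`
(also the replacement row used in `W_{i,j}`). -/
def Wrow (m M N k : ℕ) (U : ℝ → Matrix (Fin n) (Fin n) ℝ) (i : Fin n) : ℝ → Fin n → ℝ :=
  if k < M then (fun x => matD^[N] U x i) else (fun x => matD^[N - M] ((matDm m)^[M] U) x i)

/-- The `nN × nN` matrix `W(U₁,…,U_M;U_{M+1},…,U_N)`; rows are indexed by pairs
(block-row `r`, row `i` within the block) and similarly for columns. -/
def Wmat (m M N : ℕ) (U : ℕ → ℝ → Matrix (Fin n) (Fin n) ℝ) (x : ℝ) :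
    Matrix (Fin N × Fin n) (Fin N × Fin n) ℝ :=
  Matrix.of fun p q => Wblock m M (p.1 : ℕ) (q.1 : ℕ) (U (q.1 : ℕ)) x p.2 q.2

/-- The `(nN+1) × (nN+1)` matrix `W_j(U₁,…,U_M;U_{M+1},…,U_N,Ψ)`. -/
def WjMat (m M N : ℕ) (j : Fin n) (U : ℕ → ℝ → Matrix (Fin n) (Fin n) ℝ)
    (Ψ : ℝ → Fin n → ℝ) (x : ℝ) :
    Matrix ((Fin N × Fin n) ⊕ Unit) ((Fin N × Fin n) ⊕ Unit) ℝ :=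
  Matrix.of fun p q =>
    match p, q with
    | Sum.inl p, Sum.inl q => Wblock m M (p.1 : ℕ) (q.1 : ℕ) (U (q.1 : ℕ)) x p.2 q.2
    | Sum.inl p, Sum.inr _ => Wcol m M (p.1 : ℕ) Ψ x p.2
    | Sum.inr _, Sum.inl q => Wrow m M N (q.1 : ℕ) (U (q.1 : ℕ)) j x q.2
    | Sum.inr _, Sum.inr _ => vecD^[N - M] ((vecDm m)^[M] Ψ) x j

/-- The `nN × nN` matrix `W_{i,j}(U₁,…,U_M;U_{M+1},…,U_N)`: in the last block-row
(`r = N-1`) of `W` the `j`-th row of each block is replaced as prescribed. -/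
def WijMat (m M N : ℕ) (i j : Fin n) (U : ℕ → ℝ → Matrix (Fin n) (Fin n) ℝ) (x : ℝ) :
    Matrix (Fin N × Fin n) (Fin N × Fin n) ℝ :=
  Matrix.of fun p q =>
    if (p.1 : ℕ) = N - 1 ∧ p.2 = j then Wrow m M N (q.1 : ℕ) (U (q.1 : ℕ)) i x q.2
    else Wblock m M (p.1 : ℕ) (q.1 : ℕ) (U (q.1 : ℕ)) x p.2 q.2



theorem matD_iter (U : ℝ → Matrix (Fin n) (Fin n) ℝ) (r : ℕ) (x : ℝ) (i j : Fin n) :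
    matD^[r] U x i j = iteratedDeriv r (fun t => U t i j) x := by
  induction r generalizing x with
  | zero => simp
  | succ r ih =>
    rw [Function.iterate_succ_apply', iteratedDeriv_succ]
    simp only [matD, Matrix.of_apply]
    congr 1
    funext t
    exact ih t

theorem matDm_iter (m : ℕ) (U : ℝ → Matrix (Fin n) (Fin n) ℝ) (r : ℕ) (x : ℝ) (i j : Fin n) :
    (matDm m)^[r] U x i j =
      if (i : ℕ) < m then iteratedDeriv r (fun t => U t i j) x else U x i j := by
  induction r generalizing x with
  | zero => simp
  | succ r ih =>
    rw [Function.iterate_succ_apply', iteratedDeriv_succ]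
    simp only [matDm, Matrix.of_apply]
    split_ifs with h
    · congr 1
      funext t
      have := ih t
      rwa [if_pos h] at this
    · have := ih x
      rwa [if_neg h] at this

theorem vecDm_iter (m : ℕ) (c : ℝ → Fin n → ℝ) (r : ℕ) (x : ℝ) (i : Fin n) :
    (vecDm m)^[r] c x i =
      if (i : ℕ) < m then iteratedDeriv r (fun t => c t i) x else c x i := by
  induction r generalizing x with
  | zero => simp
  | succ r ih =>
    rw [Function.iterate_succ_apply', iteratedDeriv_succ]
    simp only [vecDm]
    split_ifs with h
    · congr 1
      funext t
      have := ih t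
      rwa [if_pos h] at this
    · have := ih x
      rwa [if_neg h] at this

/-- bordered column entries -/
def colE (m K : ℕ) (c : ℝ → Fin n → ℝ) (t : ℝ) : Fin K × Fin n → ℝ :=
  fun p => if (p.2 : ℕ) < m then iteratedDeriv (p.1 : ℕ) (fun s => c s p.2) t else c t p.2

/-- `R`-th derivative of the `j`-th rows -/
def rowE (K R : ℕ) (U : ℕ → ℝ → Matrix (Fin n) (Fin n) ℝ) (j : Fin n) (t : ℝ) :
    Fin K × Fin n → ℝ :=
  fun q => iteratedDeriv R (fun s => U (q.1 : ℕ) s j q.2) t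

/-- coefficient vector -/
def aV (m K : ℕ) (U : ℕ → ℝ → Matrix (Fin n) (Fin n) ℝ) (j : Fin n) (t : ℝ) :
    Fin K × Fin n → ℝ :=
  rowE K K U j t ᵥ* (Wmat m K K U t)⁻¹

/-- the transformed vector -/
def TT (m K : ℕ) (U : ℕ → ℝ → Matrix (Fin n) (Fin n) ℝ) (c : ℝ → Fin n → ℝ) (t : ℝ)
    (j : Fin n) : ℝ :=
  (if (j : ℕ) < m then iteratedDeriv K (fun s => c s j) t else c t j)
    - aV m K U j t ⬝ᵥ colE m K c t

theorem Wcol_eq (m K r : ℕ) (hr : r < K) (c : ℝ → Fin n → ℝ) (t : ℝ) (i : Fin n) :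
    Wcol m K r c t i =
      if (i : ℕ) < m then iteratedDeriv r (fun s => c s i) t else c t i := by
  rw [Wcol, if_pos hr, vecDm_iter]

theorem iteratedDeriv_blk {m : ℕ} {V : ℝ → Matrix (Fin n) (Fin n) ℝ} (hV : BlockDiag m V)
    (i l : Fin n) (h : m ≤ (i : ℕ) ∨ m ≤ (l : ℕ)) (r : ℕ) (hr : r ≠ 0) (t : ℝ) :
    iteratedDeriv r (fun s => V s i l) t = 0 := by
  have : (fun s => V s i l) = fun _ => if i = l then (1:ℝ) else 0 := by
    funext s; exact hV s i l h
  rw [this, iteratedDeriv_const, if_neg hr]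

theorem Wmat_apply (m K : ℕ) (U : ℕ → ℝ → Matrix (Fin n) (Fin n) ℝ)
    (hUblk : ∀ k < K, BlockDiag m (U k)) (t : ℝ) (p q : Fin K × Fin n) :
    Wmat m K K U t p q =
      if (p.2 : ℕ) < m then iteratedDeriv (p.1 : ℕ) (fun s => U (q.1 : ℕ) s p.2 q.2) t
      else if (p.1 : ℕ) ≤ q.1 ∧ p.2 = q.2 then 1 else 0 := by
  simp only [Wmat, Matrix.of_apply, Wblock, if_pos q.1.2]
  by_cases h : (p.1 : ℕ) ≤ q.1
  · rw [if_pos h, matDm_iter]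
    simp only [h, true_and]
    split_ifs with h1 h2 h2
    · rfl
    · rw [hUblk _ q.1.2 t _ _ (Or.inl (not_lt.mp h1)), if_pos h2]
    · rw [hUblk _ q.1.2 t _ _ (Or.inl (not_lt.mp h1)), if_neg h2]
  · rw [if_neg h, matD_iter]
    simp only [h, false_and, if_false]
    split_ifs with h1
    · rfl
    · exact iteratedDeriv_blk (hUblk _ q.1.2) _ _ (Or.inl (not_lt.mp h1)) _ (by omega) t

theorem aV_mul (m K : ℕ) (U : ℕ → ℝ → Matrix (Fin n) (Fin n) ℝ) (j : Fin n) (t : ℝ)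
    (hd : (Wmat m K K U t).det ≠ 0) :
    aV m K U j t ᵥ* Wmat m K K U t = rowE K K U j t := by
  rw [aV, Matrix.vecMul_vecMul, Matrix.nonsing_inv_mul _ (isUnit_iff_ne_zero.mpr hd),
    Matrix.vecMul_one]

theorem aV_zero (m K : ℕ) (hK : K ≠ 0) (U : ℕ → ℝ → Matrix (Fin n) (Fin n) ℝ)
    (hUblk : ∀ k < K, BlockDiag m (U k)) (j : Fin n) (t : ℝ)
    (hd : (Wmat m K K U t).det ≠ 0) (i : Fin n) (hi : m ≤ (i : ℕ)) (k : ℕ) (hk : k < K) :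
    aV m K U j t (⟨k, hk⟩, i) = 0 := by
  induction k using Nat.strong_induction_on with
  | _ k ih =>
  have h := congrFun (aV_mul m K U j t hd) (⟨k, hk⟩, i)
  rw [Matrix.vecMul, dotProduct, Finset.sum_eq_single (⟨k, hk⟩, i)] at h
  · rw [Wmat_apply m K U hUblk, if_neg (not_lt.mpr hi)] at h
    simp only [le_refl, and_self, if_true, mul_one] at h
    rw [h, rowE]
    exact iteratedDeriv_blk (hUblk _ hk) _ _ (Or.inr hi) _ hK t
  · rintro ⟨⟨r, hr⟩, i'⟩ - hne
    rw [Wmat_apply m K U hUblk]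
    simp only
    by_cases h1 : (i' : ℕ) < m
    · rw [if_pos h1]
      by_cases hr0 : r = 0
      · subst hr0
        rw [iteratedDeriv_zero, hUblk _ hk t _ _ (Or.inr hi), if_neg, mul_zero]
        rintro rfl; omega
      · rw [iteratedDeriv_blk (hUblk _ hk) _ _ (Or.inr hi) _ hr0 t, mul_zero]
    · rw [if_neg h1]
      split_ifs with h2
      · obtain ⟨h2, rfl⟩ := h2
        rw [ih r (lt_of_le_of_ne h2 (by rintro rfl; exact hne rfl)) hr, zero_mul]
      · rw [mul_zero]
  · intro h; exact absurd (Finset.mem_univ _) h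

theorem aV_low (m K : ℕ) (hK : K ≠ 0) (U : ℕ → ℝ → Matrix (Fin n) (Fin n) ℝ)
    (hUblk : ∀ k < K, BlockDiag m (U k)) (j : Fin n) (t : ℝ) (hj : m ≤ (j : ℕ)) :
    aV m K U j t = 0 := by
  have : rowE K K U j t = 0 := by
    funext q
    exact iteratedDeriv_blk (hUblk _ q.1.2) _ _ (Or.inl hj) _ hK t
  rw [aV, this, Matrix.zero_vecMul]

theorem diff_det {ι : Type*} [Fintype ι] [DecidableEq ι] (M : ℝ → Matrix ι ι ℝ) (x : ℝ)
    (h : ∀ i j, DifferentiableAt ℝ (fun t => M t i j) x) :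
    DifferentiableAt ℝ (fun t => (M t).det) x := by
  simp only [Matrix.det_apply]
  refine DifferentiableAt.fun_sum fun σ _ => ?_
  refine DifferentiableAt.fun_const_smul ?_ _
  exact DifferentiableAt.fun_finsetProd fun i _ => h _ _

theorem diff_inv {ι : Type*} [Fintype ι] [DecidableEq ι] (M : ℝ → Matrix ι ι ℝ) (x : ℝ)
    (h : ∀ i j, DifferentiableAt ℝ (fun t => M t i j) x) (hd : (M x).det ≠ 0) (i j : ι) :
    DifferentiableAt ℝ (fun t => (M t)⁻¹ i j) x := by
  simp only [Matrix.inv_def, Matrix.smul_apply, smul_eq_mul, Ring.inverse_eq_inv',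
    Matrix.adjugate_apply]
  refine ((diff_det M x h).inv hd).mul (diff_det _ x fun a b => ?_)
  simp only [Matrix.updateRow_apply]
  split_ifs
  · exact differentiableAt_const _
  · exact h _ _

theorem diff_iter {f : ℝ → ℝ} (hf : ContDiff ℝ (⊤ : ℕ∞) f) (r : ℕ) (x : ℝ) :
    HasDerivAt (iteratedDeriv r f) (iteratedDeriv (r+1) f x) x := by
  rw [iteratedDeriv_succ]
  refine DifferentiableAt.hasDerivAt ?_
  exact (hf.differentiable_iteratedDeriv r (by exact_mod_cast WithTop.coe_lt_top _)) x

theorem key (m K : ℕ) (hK : K ≠ 0) (U : ℕ → ℝ → Matrix (Fin n) (Fin n) ℝ)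
    (hUsmooth : ∀ k < K, SmoothMat (U k))
    (hUblk : ∀ k < K, BlockDiag m (U k)) (c : ℝ → Fin n → ℝ) (hc : SmoothVec c)
    (j : Fin n) (hj : (j : ℕ) < m) (x : ℝ)
    (hd : ∀ᶠ t in nhds x, (Wmat m K K U t).det ≠ 0) :
    iteratedDeriv (K+1) (fun s => c s j) x
      - (rowE K (K+1) U j x ᵥ* (Wmat m K K U x)⁻¹) ⬝ᵥ colE m K c x
    = deriv (fun t => TT m K U c t j) x
      + ∑ i : Fin n, aV m K U j x (⟨K-1, by omega⟩, i) * TT m K U c x i := by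
  have hdx := hd.self_of_nhds
  have hW : ∀ p q : Fin K × Fin n, HasDerivAt (fun t => Wmat m K K U t p q)
      (if (p.2 : ℕ) < m then iteratedDeriv ((p.1 : ℕ)+1) (fun s => U (q.1 : ℕ) s p.2 q.2) x
        else 0) x := by
    intro p q
    simp only [Wmat_apply m K U hUblk]
    split_ifs with h1
    · exact diff_iter (hUsmooth _ q.1.2 _ _) _ _
    · exact hasDerivAt_const _ _
    · exact hasDerivAt_const _ _
  set W' : Matrix (Fin K × Fin n) (Fin K × Fin n) ℝ := Matrix.of fun p q =>
      (if (p.2 : ℕ) < m then iteratedDeriv ((p.1 : ℕ)+1) (fun s => U (q.1 : ℕ) s p.2 q.2) x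
        else 0) with hW'
  have hrow : ∀ q : Fin K × Fin n, HasDerivAt (fun t => rowE K K U j t q)
      (rowE K (K+1) U j x q) x := fun q => diff_iter (hUsmooth _ q.1.2 _ _) _ _
  have hA : ∀ p, ∃ a', HasDerivAt (fun t => aV m K U j t p) a' x := by
    intro p
    refine ⟨_, DifferentiableAt.hasDerivAt ?_⟩
    simp only [aV, Matrix.vecMul, dotProduct]
    refine DifferentiableAt.fun_sum fun q _ => ?_
    exact (hrow q).differentiableAt.mul
      (diff_inv _ x (fun a b => (hW a b).differentiableAt) hdx _ _)
  choose A' hA' using hA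
  have hcol : ∀ p : Fin K × Fin n, HasDerivAt (fun t => colE m K c t p)
      (if (p.2 : ℕ) < m then iteratedDeriv ((p.1 : ℕ)+1) (fun s => c s p.2) x
        else deriv (fun s => c s p.2) x) x := by
    intro p
    simp only [colE]
    split_ifs with h1
    · exact diff_iter (hc _) _ _
    · exact ((hc p.2).differentiable (by simp)).differentiableAt.hasDerivAt
  set col' : Fin K × Fin n → ℝ := fun p =>
      (if (p.2 : ℕ) < m then iteratedDeriv ((p.1 : ℕ)+1) (fun s => c s p.2) x
        else deriv (fun s => c s p.2) x) with hcol'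
  -- derivative of the linear system
  have hsys : A' ᵥ* Wmat m K K U x + aV m K U j x ᵥ* W' = rowE K (K+1) U j x := by
    funext q
    have h1 : HasDerivAt (fun t => (aV m K U j t ᵥ* Wmat m K K U t) q)
        (∑ p, (A' p * Wmat m K K U x p q + aV m K U j x p * W' p q)) x := by
      simp only [Matrix.vecMul, dotProduct]
      exact HasDerivAt.fun_sum fun p _ => (hA' p).mul (hW p q)
    have h2 : HasDerivAt (fun t => (aV m K U j t ᵥ* Wmat m K K U t) q)
        (rowE K (K+1) U j x q) x := by
      refine (hrow q).congr_of_eventuallyEq ?_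
      filter_upwards [hd] with t ht
      rw [aV_mul m K U j t ht]
    rw [← h1.unique h2, Finset.sum_add_distrib]
    rfl
  have hT : HasDerivAt (fun t => TT m K U c t j)
      (iteratedDeriv (K+1) (fun s => c s j) x
        - ∑ p, (A' p * colE m K c x p + aV m K U j x p * col' p)) x := by
    simp only [TT, if_pos hj, dotProduct]
    refine (diff_iter (hc j) K x).sub ?_
    exact HasDerivAt.fun_sum fun p _ => (hA' p).mul (hcol p)
  rw [hT.deriv, ← hsys, Matrix.add_vecMul, Matrix.vecMul_vecMul,
    Matrix.mul_nonsing_inv _ (isUnit_iff_ne_zero.mpr hdx), Matrix.vecMul_one, add_dotProduct,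
    Finset.sum_add_distrib]
  set v := (Wmat m K K U x)⁻¹ *ᵥ colE m K c x with hv
  have hWv : Wmat m K K U x *ᵥ v = colE m K c x := by
    rw [hv, Matrix.mulVec_mulVec, Matrix.mul_nonsing_inv _ (isUnit_iff_ne_zero.mpr hdx),
      Matrix.one_mulVec]
  rw [← Matrix.dotProduct_mulVec, ← hv, ← Matrix.dotProduct_mulVec]
  have hmain : ∑ p, aV m K U j x p * col' p - aV m K U j x ⬝ᵥ (W' *ᵥ v)
      = ∑ i : Fin n, aV m K U j x (⟨K-1, by omega⟩, i) * TT m K U c x i := by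
    rw [dotProduct, ← Finset.sum_sub_distrib, Fintype.sum_prod_type,
      Finset.sum_eq_single (⟨K-1, by omega⟩ : Fin K)]
    · refine Finset.sum_congr rfl fun i _ => ?_
      rw [← mul_sub]
      by_cases hi : (i : ℕ) < m
      · congr 1
        have hK1 : K - 1 + 1 = K := by omega
        simp only [hcol', hW', TT, if_pos hi, Matrix.mulVec, dotProduct, Matrix.of_apply, hK1]
        congr 1
        change rowE K K U i x ⬝ᵥ v = aV m K U i x ⬝ᵥ colE m K c x
        rw [aV, ← Matrix.dotProduct_mulVec]
      · rw [aV_zero m K hK U hUblk j x hdx i (not_lt.mp hi), zero_mul, zero_mul]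
    · rintro ⟨r, hr⟩ - hne
      have hr1 : r + 1 < K := by
        have : r ≠ K - 1 := fun h => hne (by ext; exact h)
        omega
      refine Finset.sum_eq_zero fun i _ => ?_
      rw [← mul_sub]
      by_cases hi : (i : ℕ) < m
      · have h1 := congrFun hWv (⟨r+1, hr1⟩, i)
        have h2 : (W' *ᵥ v) (⟨r, hr⟩, i) = colE m K c x (⟨r+1, hr1⟩, i) := by
          rw [← h1]
          simp only [Matrix.mulVec, dotProduct]
          refine Finset.sum_congr rfl fun q _ => ?_
          rw [Wmat_apply m K U hUblk]
          simp only [hW', Matrix.of_apply, if_pos hi]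
        rw [h2]
        simp only [hcol', colE, if_pos hi, sub_self, mul_zero]
      · rw [aV_zero m K hK U hUblk j x hdx i (not_lt.mp hi), zero_mul]
    · intro h; exact absurd (Finset.mem_univ _) h
  rw [← hmain]
  simp only [dotProduct]
  ring

theorem schur_div {ι κ : Type*} [Fintype ι] [DecidableEq ι] [Fintype κ] [DecidableEq κ]
    (A : Matrix ι ι ℝ) (B : Matrix ι κ ℝ) (C : Matrix κ ι ℝ) (D : Matrix κ κ ℝ)
    (h : A.det ≠ 0) :
    (Matrix.fromBlocks A B C D).det / A.det = (D - C * A⁻¹ * B).det := by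
  haveI := A.invertibleOfIsUnitDet (isUnit_iff_ne_zero.mpr h)
  rw [Matrix.det_fromBlocks₁₁, Matrix.invOf_eq_nonsing_inv, mul_div_cancel_left₀ _ h]

theorem WjMat_div (m K : ℕ) (U : ℕ → ℝ → Matrix (Fin n) (Fin n) ℝ)
    (c : ℝ → Fin n → ℝ) (j : Fin n) (t : ℝ) (hd : (Wmat m K K U t).det ≠ 0) :
    (WjMat m K K j U c t).det / (Wmat m K K U t).det = TT m K U c t j := by
  have : WjMat m K K j U c t = Matrix.fromBlocks (Wmat m K K U t)
      (Matrix.of fun p (_ : Unit) => colE m K c t p)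
      (Matrix.of fun (_ : Unit) q => rowE K K U j t q)
      (Matrix.of fun (_ _ : Unit) =>
        if (j : ℕ) < m then iteratedDeriv K (fun s => c s j) t else c t j) := by
    ext (p | p) (q | q)
    · rfl
    · exact Wcol_eq m K _ p.1.2 c t p.2
    · simp only [WjMat, Matrix.of_apply, Matrix.fromBlocks_apply₂₁, Wrow, if_pos q.1.2, rowE,
        matD_iter]
    · simp only [WjMat, Matrix.of_apply, Matrix.fromBlocks_apply₂₂, Nat.sub_self,
        Function.iterate_zero, id, vecDm_iter]
  rw [this, schur_div _ _ _ _ hd, Matrix.det_unique]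
  rfl

/-- index splitting -/
def splitF (K : ℕ) : (Fin K × Fin n) ⊕ (Fin n ⊕ Unit) → (Fin (K+1) × Fin n) ⊕ Unit
  | Sum.inl p => Sum.inl (p.1.castSucc, p.2)
  | Sum.inr (Sum.inl i) => Sum.inl (Fin.last K, i)
  | Sum.inr (Sum.inr u) => Sum.inr u

theorem splitF_bij (K : ℕ) : Function.Bijective (splitF (n := n) K) := by
  rw [Fintype.bijective_iff_injective_and_card]
  constructor
  · rintro (⟨r, i⟩ | i | u) (⟨r', i'⟩ | i' | u') h <;>
      simp_all [splitF, Fin.ext_iff] <;> omega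
  · simp; ring

theorem WjMat_succ_div (m K : ℕ) (hK : K ≠ 0) (U : ℕ → ℝ → Matrix (Fin n) (Fin n) ℝ)
    (c : ℝ → Fin n → ℝ) (j : Fin n) (t : ℝ) (hd : (Wmat m K K U t).det ≠ 0) :
    (WjMat m (K+1) (K+1) j U c t).det / (Wmat m K K U t).det =
    (Matrix.fromBlocks
      (Matrix.of fun j' i => TT m K U (fun s l => U K s l i) t j')
      (Matrix.of fun j' (_ : Unit) => TT m K U c t j')
      (Matrix.of fun (_ : Unit) i => iteratedDeriv (K+1) (fun s => U K s j i) t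
          - (rowE K (K+1) U j t ᵥ* (Wmat m K K U t)⁻¹) ⬝ᵥ colE m K (fun s l => U K s l i) t)
      (Matrix.of fun (_ _ : Unit) =>
          (if (j : ℕ) < m then iteratedDeriv (K+1) (fun s => c s j) t else c t j)
          - (rowE K (K+1) U j t ᵥ* (Wmat m K K U t)⁻¹) ⬝ᵥ colE m K c t)).det := by
  have e : (WjMat m (K+1) (K+1) j U c t).submatrix (Equiv.ofBijective _ (splitF_bij K))
      (Equiv.ofBijective _ (splitF_bij K)) = Matrix.fromBlocks (Wmat m K K U t)
      (Matrix.of fun p (q : Fin n ⊕ Unit) =>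
        Sum.elim (fun i => colE m K (fun s l => U K s l i) t p) (fun _ => colE m K c t p) q)
      (Matrix.of fun (p : Fin n ⊕ Unit) q =>
        Sum.elim (fun i => rowE K K U i t q) (fun _ => rowE K (K+1) U j t q) p)
      (Matrix.fromBlocks
      (Matrix.of fun j' i =>
          if (j' : ℕ) < m then iteratedDeriv K (fun s => U K s j' i) t else U K t j' i)
      (Matrix.of fun j' (_ : Unit) =>
          if (j' : ℕ) < m then iteratedDeriv K (fun s => c s j') t else c t j')
      (Matrix.of fun (_ : Unit) i => iteratedDeriv (K+1) (fun s => U K s j i) t)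
      (Matrix.of fun (_ _ : Unit) =>
          (if (j : ℕ) < m then iteratedDeriv (K+1) (fun s => c s j) t else c t j))) := by
    ext (⟨⟨r, hr⟩, i⟩ | i | u) (⟨⟨k, hk⟩, l⟩ | l | v)
    · change Wblock m (K+1) r k (U k) t i l = Wblock m K r k (U k) t i l
      rw [Wblock, Wblock, if_pos hk, if_pos (Nat.lt_succ_of_lt hk)]
    · change Wblock m (K+1) r K (U K) t i l =
        if (i : ℕ) < m then iteratedDeriv r (fun s => U K s i l) t else U K t i l
      rw [Wblock, if_pos (Nat.lt_succ_self K), if_pos hr.le, matDm_iter]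
    · exact Wcol_eq m (K+1) r (Nat.lt_succ_of_lt hr) c t i
    · change Wblock m (K+1) K k (U k) t i l = iteratedDeriv K (fun s => U k s i l) t
      rw [Wblock, if_pos (Nat.lt_succ_of_lt hk), if_neg (not_le.mpr hk), matD_iter]
    · change Wblock m (K+1) K K (U K) t i l =
        if (i : ℕ) < m then iteratedDeriv K (fun s => U K s i l) t else U K t i l
      rw [Wblock, if_pos (Nat.lt_succ_self K), if_pos le_rfl, matDm_iter]
    · exact Wcol_eq m (K+1) K (Nat.lt_succ_self K) c t i
    · change Wrow m (K+1) (K+1) k (U k) j t l = iteratedDeriv (K+1) (fun s => U k s j l) t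
      rw [Wrow, if_pos (Nat.lt_succ_of_lt hk), matD_iter]
    · change Wrow m (K+1) (K+1) K (U K) j t l = iteratedDeriv (K+1) (fun s => U K s j l) t
      rw [Wrow, if_pos (Nat.lt_succ_self K), matD_iter]
    · change vecD^[K+1-(K+1)] ((vecDm m)^[K+1] c) t j = _
      rw [Nat.sub_self, Function.iterate_zero, id, vecDm_iter]
      rfl
  rw [← Matrix.det_submatrix_equiv_self (Equiv.ofBijective _ (splitF_bij K)), e,
    schur_div _ _ _ _ hd]
  congr 1
  ext (i | u) (i' | u') <;> rfl

/-- For a purely singular chain (`M = N`), the determinant of the bordered matrix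
`Y_N^j` equals `det W_j(U₁,…,U_N,Ψ) / det W(U₁,…,U_{N-1})`. -/
theorem det_YNj_formula {n : ℕ} (m N : ℕ) (hm : 1 ≤ m) (hmn : m < n) (hN : 2 ≤ N)
    (U : ℕ → ℝ → Matrix (Fin n) (Fin n) ℝ)
    (hUsmooth : ∀ k < N, SmoothMat (U k)) (hUblk : ∀ k < N, BlockDiag m (U k))
    (Ψ : ℝ → Fin n → ℝ) (hΨ : SmoothVec Ψ)
    (a b : ℝ) (hdet : ∀ x ∈ Set.Ioo a b, (Wmat m (N - 1) (N - 1) U x).det ≠ 0)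
    (y : ℝ → Matrix (Fin n) (Fin n) ℝ)
    (hy : ∀ (x : ℝ) (j i : Fin n),
      y x j i =
        (WjMat m (N - 1) (N - 1) j U (fun t l => U (N - 1) t l i) x).det
          / (Wmat m (N - 1) (N - 1) U x).det)
    (θ : ℝ → Fin n → ℝ)
    (hθ : ∀ (x : ℝ) (j : Fin n),
      θ x j = (WjMat m (N - 1) (N - 1) j U Ψ x).det / (Wmat m (N - 1) (N - 1) U x).det) :
    ∀ (j : Fin n), ∀ x ∈ Set.Ioo a b,
      (Matrix.of (fun p q : Fin n ⊕ Unit =>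
        match p, q with
        | Sum.inl j', Sum.inl i => y x j' i
        | Sum.inl j', Sum.inr _ => θ x j'
        | Sum.inr _, Sum.inl i => deriv (fun t => y t j i) x
        | Sum.inr _, Sum.inr _ =>
            if (j : ℕ) < m then deriv (fun t => θ t j) x else θ x j)).det
      = (WjMat m N N j U Ψ x).det / (Wmat m (N - 1) (N - 1) U x).det := by
  obtain ⟨K, rfl⟩ : ∃ K, N = K + 1 := ⟨N - 1, by omega⟩
  have hK : K ≠ 0 := by omega
  replace hdet : ∀ x ∈ Set.Ioo a b, (Wmat m K K U x).det ≠ 0 := hdet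
  replace hy : ∀ (x : ℝ) (j i : Fin n), y x j i =
        (WjMat m K K j U (fun t l => U K t l i) x).det / (Wmat m K K U x).det := hy
  replace hθ : ∀ (x : ℝ) (j : Fin n),
      θ x j = (WjMat m K K j U Ψ x).det / (Wmat m K K U x).det := hθ
  have hUs : ∀ k < K, SmoothMat (U k) := fun k hk => hUsmooth k (by omega)
  have hUb : ∀ k < K, BlockDiag m (U k) := fun k hk => hUblk k (by omega)
  intro j x hx
  change _ = (WjMat m (K+1) (K+1) j U Ψ x).det / (Wmat m K K U x).det
  have hdx := hdet x hx
  have hev : ∀ᶠ t in nhds x, (Wmat m K K U t).det ≠ 0 := by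
    filter_upwards [Ioo_mem_nhds hx.1 hx.2] with t ht using hdet t ht
  have hyT : ∀ t, (Wmat m K K U t).det ≠ 0 → ∀ j i,
      y t j i = TT m K U (fun s l => U K s l i) t j := by
    intro t ht j i
    rw [hy, WjMat_div m K U _ j t ht]
  have hθT : ∀ t, (Wmat m K K U t).det ≠ 0 → ∀ j, θ t j = TT m K U Ψ t j := by
    intro t ht j
    rw [hθ, WjMat_div m K U _ j t ht]
  have hyd : ∀ i, deriv (fun t => y t j i) x
      = deriv (fun t => TT m K U (fun s l => U K s l i) t j) x := by
    intro i
    refine Filter.EventuallyEq.deriv_eq ?_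
    filter_upwards [hev] with t ht using hyT t ht j i
  have hθd : deriv (fun t => θ t j) x = deriv (fun t => TT m K U Ψ t j) x := by
    refine Filter.EventuallyEq.deriv_eq ?_
    filter_upwards [hev] with t ht using hθT t ht j
  have hcs : ∀ i, SmoothVec (fun s l => U K s l i) := fun i l => hUsmooth K (by omega) l i
  rw [WjMat_succ_div m K hK U Ψ j x hdx]
  set Y := (Matrix.of (fun p q : Fin n ⊕ Unit =>
        match p, q with
        | Sum.inl j', Sum.inl i => y x j' i
        | Sum.inl j', Sum.inr _ => θ x j'
        | Sum.inr _, Sum.inl i => deriv (fun t => y t j i) x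
        | Sum.inr _, Sum.inr _ =>
            if (j : ℕ) < m then deriv (fun t => θ t j) x else θ x j)) with hY
  have hE : (Matrix.fromBlocks (1 : Matrix (Fin n) (Fin n) ℝ) 0
      (Matrix.of fun (_ : Unit) i => aV m K U j x (⟨K-1, by omega⟩, i))
      (1 : Matrix Unit Unit ℝ)).det = 1 := by
    rw [Matrix.det_fromBlocks_zero₁₂]; simp
  rw [← one_mul Y.det, ← hE, ← Matrix.det_mul]
  congr 1
  have hrow0 : ¬ (j : ℕ) < m → rowE K (K+1) U j x = 0 := by
    intro hj
    funext q
    exact iteratedDeriv_blk (hUb _ q.1.2) _ _ (Or.inl (not_lt.mp hj)) _ (by omega) x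
  ext (i | u) (i' | u')
  · simp [Matrix.mul_apply, hY, hyT x hdx, Matrix.one_apply]
  · simp [Matrix.mul_apply, hY, hθT x hdx, Matrix.one_apply]
  · simp only [Matrix.mul_apply, Fintype.sum_sum_type, Matrix.fromBlocks_apply₂₁,
      Matrix.fromBlocks_apply₂₂, Matrix.of_apply, hY, hyd, hyT x hdx, Finset.univ_unique,
      Finset.sum_singleton, Matrix.one_apply, if_true, one_mul]
    by_cases hj : (j : ℕ) < m
    · rw [key m K hK U hUs hUb _ (hcs i') j hj x hev, add_comm]
    · have h0 : ∀ t, TT m K U (fun s l => U K s l i') t j = if j = i' then 1 else 0 := by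
        intro t
        rw [TT, if_neg hj, aV_low m K hK U hUb j t (not_lt.mp hj), zero_dotProduct, sub_zero]
        exact hUblk K (by omega) t _ _ (Or.inl (not_lt.mp hj))
      simp only [h0]
      rw [aV_low m K hK U hUb j x (not_lt.mp hj), hrow0 hj,
        iteratedDeriv_blk (hUblk K (by omega)) _ _ (Or.inl (not_lt.mp hj)) _ (by omega) x]
      simp
  · simp only [Matrix.mul_apply, Fintype.sum_sum_type, Matrix.fromBlocks_apply₂₁,
      Matrix.fromBlocks_apply₂₂, Matrix.of_apply, hY, hθd, hθT x hdx, Finset.univ_unique,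
      Finset.sum_singleton, Matrix.one_apply, if_true, one_mul]
    by_cases hj : (j : ℕ) < m
    · rw [if_pos hj, if_pos hj, key m K hK U hUs hUb _ hΨ j hj x hev, add_comm]
    · rw [if_neg hj, if_neg hj, TT, if_neg hj, aV_low m K hK U hUb j x (not_lt.mp hj), hrow0 hj]
      simp

end SingularDarboux
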